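/- arXiv:2410.16761 — 3 statements merged into one kernel-verified Lean document; each statement's English description precedes it below -/
import Mathlib

section
/- Let B be an abelian group with operators in a set A, let σ_A, δ_A : A → A be maps, and let σ_B, δ_B be additive endomorphisms of B. Suppose that σ_B is σ_A-twisted and that δ_B is a δ_A-twisted σ_A-derivation. Then for all a ∈ A, b ∈ B and j, m, n ∈ ℕ the identity ∑_{i ∈ ℕ} π_i^m(a · π_{j−i}^n(b)) = ∑_{i ∈ ℕ} ∑_{w ∈ W_{m,i}} w_A(a) · π_j^{i+n}(b) holds in B, where W_{m,i} is the set of words of length m in the two letters σ and δ containing exactly i occurrences of σ, w_A(a) ∈ A is obtained by applying to a the corresponding composition of σ_A and δ_A, terms with j − i < 0 are zero, and both sums are finite. -/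
/-- `words m k` : the words of length `m` in the two letters `σ` (encoded `true`)
and `δ` (encoded `false`) containing exactly `k` occurrences of `σ`. -/
def words (m k : ℕ) : Finset (Fin m → Bool) :=
  Finset.univ.filter fun w => (Finset.univ.filter fun t => w t = true).card = k

/-- Apply a word in the letters `σ`, `δ` to `x`, i.e. the composition of the
corresponding maps applied to `x`. -/
def wordApply {X : Type*} (σ δ : X → X) {m : ℕ} (w : Fin m → Bool) (x : X) : X :=
  (List.ofFn fun t => if w t then σ else δ).foldr (fun f y => f y) x

/-- `piFun σ δ i j` is the map `π_j^i : B → B`, the sum of all `binom(i,j)`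
compositions of `j` instances of `σ` and `i - j` instances of `δ`
(in particular it is `0` for `j > i` and the identity for `i = j = 0`). -/
def piFun {B : Type*} [AddCommMonoid B] (σ δ : B → B) (i j : ℕ) (b : B) : B :=
  ∑ w ∈ words i j, wordApply σ δ w b

/-! In `End(B)[X]`, with `X` central, put `D := σ_B X + δ_B`. Expanding `D ^ i` shows that `π_j^i`
is the coefficient of `X ^ j` in `D ^ i`. The two hypotheses say together that
`D a = σ_A(a) D + δ_A(a)`, so moving the factors `D` past `a` one at a time gives
`D ^ m a D ^ n = ∑ w, w_A(a) D ^ (i + n)`, where `w` runs over all words of length `m` and `i`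
counts the letters `σ` in `w`. The theorem compares coefficients of `X ^ j`. -/

open Finset Polynomial

/-- The number of occurrences of the letter `σ` in a word. -/
def sigmaCount {m : ℕ} (w : Fin m → Bool) : ℕ := #{t | w t = true}

theorem sigmaCount_cons {m : ℕ} (c : Bool) (w : Fin m → Bool) :
    sigmaCount (Fin.cons c w : Fin (m + 1) → Bool) = sigmaCount w + c.toNat := by
  unfold sigmaCount
  rw [Fin.card_filter_univ_succ]
  cases c <;> simp

theorem sigmaCount_le {m : ℕ} (w : Fin m → Bool) : sigmaCount w ≤ m :=
  card_finset_fin_le _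

theorem words_eq_filter (m k : ℕ) : words m k = univ.filter (sigmaCount · = k) := rfl

theorem wordApply_cons {X : Type*} (σ δ : X → X) {m : ℕ} (c : Bool) (w : Fin m → Bool) (x : X) :
    wordApply σ δ (Fin.cons c w : Fin (m + 1) → Bool) x =
      (if c then σ else δ) (wordApply σ δ w x) := by
  simp [wordApply, List.ofFn_succ]

theorem map_wordApply {X Y : Type*} {σ δ : X → X} {σ' δ' : Y → Y} {f : X → Y}
    (hσ : Function.Semiconj f σ σ') (hδ : Function.Semiconj f δ δ')
    {m : ℕ} (w : Fin m → Bool) (x : X) :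
    f (wordApply σ δ w x) = wordApply σ' δ' w (f x) := by
  induction w using Fin.consInduction with
  | elim0 => simp [wordApply]
  | cons c w ih => cases c <;> simp [wordApply_cons, hσ.eq, hδ.eq, ih]

section Sums

variable {M : Type*} [AddCommMonoid M] {m : ℕ}

theorem sum_fin_cons_bool (f : (Fin (m + 1) → Bool) → M) :
    ∑ w, f w = ∑ w : Fin m → Bool, (f (Fin.cons true w) + f (Fin.cons false w)) := by
  rw [← (Fin.consEquiv fun _ : Fin (m + 1) => Bool).sum_comp, Fintype.sum_prod_type]
  simp [Fin.consEquiv, sum_add_distrib]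

theorem sum_range_sum_words (f : ℕ → (Fin m → Bool) → M) :
    ∑ i ∈ range (m + 1), ∑ w ∈ words m i, f i w = ∑ w, f (sigmaCount w) w := by
  have sigmaCount_mem (w : Fin m → Bool) (_ : w ∈ univ) : sigmaCount w ∈ range (m + 1) :=
    mem_range_succ_iff.mpr (sigmaCount_le w)
  rw [← sum_fiberwise_of_maps_to sigmaCount_mem]
  refine sum_congr rfl fun i _ => sum_congr (words_eq_filter m i) fun w hw => ?_
  rw [(mem_filter.mp hw).2]

end Sums

section Semiring

variable {A R : Type*} [Semiring R]

-- For `E = D` this is iterated Ore commutation; for `E = X` and `ι = C` it expands `(s X + d) ^ m`.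
theorem pow_mul_eq_sum_wordApply {σ δ : A → A} {ι : A → R} {D E : R}
    (h : ∀ a, D * ι a = ι (σ a) * E + ι (δ a)) (m : ℕ) (a : A) :
    D ^ m * ι a = ∑ w : Fin m → Bool, ι (wordApply σ δ w a) * E ^ sigmaCount w := by
  induction m with
  | zero => simp [wordApply, sigmaCount]
  | succ m ih =>
    calc D ^ (m + 1) * ι a
        = ∑ w : Fin m → Bool, D * ι (wordApply σ δ w a) * E ^ sigmaCount w := by
          simp only [pow_succ', mul_assoc, ih, mul_sum]
      _ = ∑ w : Fin m → Bool, (ι (σ (wordApply σ δ w a)) * E ^ (sigmaCount w + 1) +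
            ι (δ (wordApply σ δ w a)) * E ^ sigmaCount w) := by
          simp only [h, add_mul, mul_assoc, pow_succ']
      _ = ∑ w : Fin (m + 1) → Bool, ι (wordApply σ δ w a) * E ^ sigmaCount w := by
          simp [sum_fin_cons_bool, wordApply_cons, sigmaCount_cons]

/-- The linear polynomial `s * X + d`, with `X` central: when `s` and `d` are the endomorphisms
`σ` and `δ`, the coefficient of `X ^ j` in its `i`-th power is `π_j^i`. -/
noncomputable def piPoly (s d : R) : R[X] := C s * X + C d

theorem piPoly_mul_C (s d r : R) : piPoly s d * C r = C (s * r) * X + C (d * r) := by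
  simp only [piPoly, add_mul, mul_assoc, X_mul_C, C_mul]

theorem coeff_piPoly_pow (s d : R) (i j : ℕ) :
    (piPoly s d ^ i).coeff j = ∑ w ∈ words i j, wordApply (s * ·) (d * ·) w 1 := by
  have expansion := pow_mul_eq_sum_wordApply (piPoly_mul_C s d) i 1
  rw [C_1, mul_one] at expansion
  simp only [expansion, finsetSum_coeff, coeff_C_mul_X_pow, words_eq_filter, sum_filter, eq_comm]

theorem piPoly_pow_mul_C_mul_pow {σ δ : A → A} {ι : A → R} {s d : R}
    (hσ : ∀ a, s * ι a = ι (σ a) * s) (hδ : ∀ a, d * ι a = ι (σ a) * d + ι (δ a))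
    (m n : ℕ) (a : A) :
    piPoly s d ^ m * C (ι a) * piPoly s d ^ n =
      ∑ w : Fin m → Bool, C (ι (wordApply σ δ w a)) * piPoly s d ^ (sigmaCount w + n) := by
  have commutation (a : A) :
      piPoly s d * C (ι a) = C (ι (σ a)) * piPoly s d + C (ι (δ a)) := by
    rw [piPoly_mul_C, hσ, hδ]
    simp only [piPoly, C_mul, C_add, mul_add, mul_assoc, add_assoc]
  rw [pow_mul_eq_sum_wordApply (ι := fun a => C (ι a)) commutation]
  simp only [sum_mul, mul_assoc, pow_add]

theorem sum_coeff_piPoly_pow_mul {σ δ : A → A} {ι : A → R} {s d : R}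
    (hσ : ∀ a, s * ι a = ι (σ a) * s) (hδ : ∀ a, d * ι a = ι (σ a) * d + ι (δ a))
    (j m n : ℕ) (a : A) :
    ∑ i ∈ range (j + 1), (piPoly s d ^ m).coeff i * ι a * (piPoly s d ^ n).coeff (j - i) =
      ∑ w : Fin m → Bool, ι (wordApply σ δ w a) * (piPoly s d ^ (sigmaCount w + n)).coeff j := by
  have coeff_eq := congrArg (coeff · j) (piPoly_pow_mul_C_mul_pow hσ hδ m n a)
  rw [coeff_mul, Nat.sum_antidiagonal_eq_sum_range_succ_mk] at coeff_eq
  simpa only [coeff_mul_C, finsetSum_coeff, coeff_C_mul] using coeff_eq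

end Semiring

section End

variable {A B : Type*} [AddCommMonoid B]

theorem addMonoidEnd_sum_apply {ι : Type*} (s : Finset ι) (f : ι → AddMonoid.End B) (b : B) :
    (∑ i ∈ s, f i) b = ∑ i ∈ s, f i b :=
  AddMonoidHom.finsetSum_apply f s b

theorem piFun_eq_coeff_piPoly_pow (σ δ : AddMonoid.End B) (i j : ℕ) (b : B) :
    piFun σ δ i j b = (piPoly σ δ ^ i).coeff j b := by
  have evaluate (w : Fin i → Bool) :
      wordApply (σ * ·) (δ * ·) w (1 : AddMonoid.End B) b = wordApply σ δ w b :=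
    map_wordApply (f := fun g : AddMonoid.End B => g b) (fun _ => rfl) (fun _ => rfl) w 1
  simp only [piFun, coeff_piPoly_pow, addMonoidEnd_sum_apply, evaluate]

theorem stmt9_general (act : A → AddMonoid.End B) (σA δA : A → A) (σB δB : AddMonoid.End B)
    (hσ : ∀ (a : A) (b : B), σB (act a b) = act (σA a) (σB b))
    (hδ : ∀ (a : A) (b : B), δB (act a b) = act (σA a) (δB b) + act (δA a) b)
    (a : A) (b : B) (j m n : ℕ) :
    ∑ i ∈ range (j + 1), piFun σB δB m i (act a (piFun σB δB n (j - i) b)) =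
      ∑ i ∈ range (m + 1), ∑ w ∈ words m i,
        act (wordApply σA δA w a) (piFun σB δB (i + n) j b) := by
  have twisted (a : A) : σB * act a = act (σA a) * σB := AddMonoid.End.ext _ (hσ a)
  have derivation (a : A) : δB * act a = act (σA a) * δB + act (δA a) :=
    AddMonoid.End.ext _ (hδ a)
  have coeff_eq := DFunLike.congr_fun (sum_coeff_piPoly_pow_mul twisted derivation j m n a) b
  simp only [addMonoidEnd_sum_apply, AddMonoid.End.coe_mul, Function.comp_apply,
    ← piFun_eq_coeff_piPoly_pow] at coeff_eq
  rw [coeff_eq,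
    sum_range_sum_words fun i w => act (wordApply σA δA w a) (piFun σB δB (i + n) j b)]

end End

/-- Let `B` be an abelian group with operators in a set `A`, let
`σA δA : A → A` be maps and `σB δB` additive endomorphisms of `B` such that `σB`
is `σA`-twisted and `δB` is a `δA`-twisted `σA`-derivation.  Then for all
`a ∈ A`, `b ∈ B` and `j m n : ℕ`:
`∑_{i} π_i^m (a • π_{j-i}^n(b)) = ∑_i ∑_{w ∈ W_{m,i}} w_A(a) • π_j^{i+n}(b)`
(on the left only terms with `i ≤ j` can be nonzero, so the sum is over
`0 ≤ i ≤ j`; on the right only terms with `i ≤ m` occur). -/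
theorem stmt9 {A B : Type*} [AddCommGroup B] (act : A → B →+ B)
    (σA δA : A → A) (σB δB : B →+ B)
    (hσ : ∀ (a : A) (b : B), σB (act a b) = act (σA a) (σB b))
    (hδ : ∀ (a : A) (b : B), δB (act a b) = act (σA a) (δB b) + act (δA a) b)
    (a : A) (b : B) (j m n : ℕ) :
    ∑ i ∈ Finset.range (j + 1), piFun ⇑σB ⇑δB m i (act a (piFun ⇑σB ⇑δB n (j - i) b)) =
      ∑ i ∈ Finset.range (m + 1), ∑ w ∈ words m i,
        act (wordApply σA δA w a) (piFun ⇑σB ⇑δB (i + n) j b) :=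
  stmt9_general act σA δA σB δB hσ hδ a b j m n
end

section
/- Let R be a left distributive ring with 0r = 0 for all r ∈ R, let σ_R, δ_R : R → R be maps, and let M be a left distributive, s-unital, and Noetherian left R-module with 0m = 0 for all m ∈ M. Let σ_M, δ_M be additive endomorphisms of M and suppose that σ_M is a σ_R-twisted surjection (i.e., σ_M is surjective and σ_M(rm) = σ_R(r)σ_M(m) for all r ∈ R, m ∈ M). Then the Ore module extension M[x;σ_M,δ_M] is Noetherian as a left R[x;σ_R,δ_R]-module, i.e., every ascending chain of R[x]-submodules of M[x] stabilizes. -/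
/-- The Ore action of a polynomial `α = ∑ aᵢ xⁱ` over the operator set `A` on a
polynomial `β = ∑ bⱼ xʲ` over the abelian group `B` (polynomials are encoded as
finitely supported functions `ℕ →₀ _`), given by
`α β = ∑_{i,j,k} (aᵢ • π_k^i(bⱼ)) x^{k+j}`, where the maps `π_k^i` are built
from `σ` and `δ` (only the terms with `k ≤ i` can be nonzero). -/
noncomputable def oreAct {A B : Type*} [Zero A] [AddCommGroup B] (act : A → B → B) (σ δ : B → B)
    (α : ℕ →₀ A) (β : ℕ →₀ B) : ℕ →₀ B :=
  α.sum fun i a => β.sum fun j b =>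
    ∑ k ∈ Finset.range (i + 1), Finsupp.single (k + j) (act a (piFun σ δ i k b))

/-- `opSet act S n` is the set `Aⁿ S` of elements
`a₁ (a₂ (⋯ (aₙ s) ⋯))` with `a₁, …, aₙ ∈ A` and `s ∈ S` (and `A⁰ S = S`). -/
def opSet {A B : Type*} (act : A → B → B) (S : Set B) : ℕ → Set B
  | 0 => S
  | n + 1 => {x | ∃ a : A, ∃ s ∈ opSet act S n, x = act a s}

/-- A subgroup of an abelian group `B` with operators in `A` is *stable* if it
is closed under the action of `A`. -/
def IsStableAdd {A B : Type*} [AddGroup B] (act : A → B → B) (C : AddSubgroup B) : Prop :=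
  ∀ a : A, ∀ b ∈ C, act a b ∈ C

/-- The smallest stable subgroup `⟨S⟩` of `B` containing the set `S`. -/
def stableClosureAdd {A B : Type*} [AddGroup B] (act : A → B → B) (S : Set B) : AddSubgroup B :=
  sInf {C : AddSubgroup B | IsStableAdd act C ∧ S ⊆ C}

/-- `[S]` : the subgroup of `B` generated by the union of the sets `Aⁿ S`, `n ≥ 1`. -/
def bracketAdd {A B : Type*} [AddGroup B] (act : A → B → B) (S : Set B) : AddSubgroup B :=
  AddSubgroup.closure (⋃ n : ℕ, opSet act S (n + 1))

/-- A group `B` with operators in `A` is *stably Noetherian* if every ascending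
chain of stable subgroups of `B` eventually stabilizes. -/
def StablyNoetherianAdd {A B : Type*} [AddGroup B] (act : A → B → B) : Prop :=
  ∀ f : ℕ → AddSubgroup B, (∀ n, IsStableAdd act (f n)) → Monotone f →
    ∃ N : ℕ, ∀ n : ℕ, N ≤ n → f n = f N

/-!
The argument is that of Hilbert's basis theorem. To a submodule `U` of `M[x]` attach, for each
`n`, the group `Lₙ` of coefficients of `xⁿ` in the members of `U` of degree at most `n`.
Comparable submodules with the same `Lₙ` for all `n` coincide. A monomial `r x` turns a leading
coefficient `b` into `r σ(b)`, which is `σ(b)` for suitable `r` as `M` is s-unital; so `σ` maps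
`Lₙ` into `Lₙ₊₁`, and the preimages `(σⁿ)⁻¹ Lₙ` increase with `n`. They are submodules of `M`
because `σ` is twisted, and they determine `Lₙ` because `σ` is surjective. Thus `M[x]` has the
ascending chain condition because the monotone maps from `ℕ` to the submodules of `M` do.
-/

theorem wellFoundedGT_orderHom {ι α : Type*} [Preorder ι] [WellQuasiOrderedLE ι] [Preorder α]
    [WellFoundedGT α] : WellFoundedGT (ι →o α) := by
  rw [WellFoundedGT, isWellFounded_iff, RelEmbedding.wellFounded_iff_isEmpty]
  refine ⟨fun F => ?_⟩
  -- `F n` grows at some point `i n`; `F n (i n)` rises strictly wherever `i` is monotone.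
  have hF : StrictMono F := fun _ _ h => F.map_rel_iff.2 h
  have exists_lt (n : ℕ) : ∃ i, F n i < F (n + 1) i := by
    obtain ⟨hle, hnle⟩ := lt_iff_le_not_ge.1 (hF n.lt_succ_self)
    obtain ⟨i, hi⟩ := not_forall.1 hnle
    exact ⟨i, lt_of_le_not_ge (hle i) hi⟩
  choose i hi using exists_lt
  obtain ⟨g, hg⟩ := wellQuasiOrdered_iff_exists_monotone_subseq.1 wellQuasiOrdered_le i
  refine not_strictMono_of_wellFoundedGT (fun n => F (g n) (i (g n)))
    (strictMono_nat_of_lt_succ fun n => ?_)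
  calc F (g n) (i (g n)) < F (g n + 1) (i (g n)) := hi (g n)
    _ ≤ F (g (n + 1)) (i (g n)) := hF.monotone (g.strictMono n.lt_succ_self) _
    _ ≤ F (g (n + 1)) (i (g (n + 1))) := (F _).monotone (hg n (n + 1) n.le_succ)

theorem stablyNoetherianAdd_iff_wellFoundedGT {A B : Type*} [AddGroup B] {act : A → B → B} :
    StablyNoetherianAdd act ↔ WellFoundedGT {C : AddSubgroup B // IsStableAdd act C} := by
  rw [wellFoundedGT_iff_monotone_chain_condition]
  constructor
  · intro h f
    obtain ⟨N, hN⟩ := h (fun n => f n) (fun n => (f n).2) f.monotone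
    exact ⟨N, fun n hn => Subtype.ext (hN n hn).symm⟩
  · intro h f hf hmono
    obtain ⟨N, hN⟩ := h ⟨fun n => ⟨f n, hf n⟩, hmono⟩
    exact ⟨N, fun n hn => congrArg Subtype.val (hN n hn).symm⟩

theorem IsStableAdd.comap {A A' B B' : Type*} [AddGroup B] [AddGroup B'] {act : A → B → B}
    {act' : A' → B' → B'} {C : AddSubgroup B'} (hC : IsStableAdd act' C) (f : B →+ B') (τ : A → A')
    (hf : ∀ a b, f (act a b) = act' (τ a) (f b)) : IsStableAdd act (C.comap f) := fun a b hb => by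
  simpa only [AddSubgroup.mem_comap, hf] using hC (τ a) (f b) hb

section Words

variable {X : Type*} {σ δ : X → X} {x : X}

theorem words_self (m : ℕ) : words m m = {fun _ => true} := by
  ext w
  have := Finset.card_eq_iff_eq_univ (Finset.univ.filter fun t => w t = true)
  rw [Fintype.card_fin] at this
  simp [words, this, Finset.filter_eq_self, funext_iff]

theorem words_eq_empty_of_lt {m k : ℕ} (h : m < k) : words m k = ∅ :=
  Finset.filter_eq_empty_iff.2 fun w _ hw =>
    h.not_ge (by simpa [hw] using Finset.card_le_univ (Finset.univ.filter fun t => w t = true))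

theorem wordApply_const_true (σ δ : X → X) (m : ℕ) (x : X) :
    wordApply σ δ (fun _ : Fin m => true) x = σ^[m] x := by
  induction m with
  | zero => simp [wordApply]
  | succ m ih => simpa [wordApply, Function.iterate_succ_apply'] using congrArg σ ih

theorem wordApply_eq_self (hσ : σ x = x) (hδ : δ x = x) {m : ℕ} (w : Fin m → Bool) :
    wordApply σ δ w x = x := by
  refine List.foldrRecOn (motive := (· = x)) _ _ rfl ?_
  rintro _ rfl f hf
  obtain ⟨t, rfl⟩ := (List.mem_ofFn' _ _).1 hf
  dsimp only
  split_ifs <;> assumption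

end Words

section PiFun

variable {B : Type*} [AddCommMonoid B] {σ δ : B → B}

theorem piFun_self (σ δ : B → B) (i : ℕ) (b : B) : piFun σ δ i i b = σ^[i] b := by
  rw [piFun, words_self, Finset.sum_singleton, wordApply_const_true]

theorem piFun_eq_zero_of_lt {i k : ℕ} (h : i < k) (b : B) : piFun σ δ i k b = 0 := by
  rw [piFun, words_eq_empty_of_lt h, Finset.sum_empty]

theorem piFun_zero (hσ : σ 0 = 0) (hδ : δ 0 = 0) (i k : ℕ) : piFun σ δ i k 0 = 0 :=
  Finset.sum_eq_zero fun w _ => wordApply_eq_self hσ hδ w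

theorem act_piFun_eq_zero {A : Type*} {act : A → B → B}
    (act_zero : ∀ a, act a 0 = 0) (hσ : σ 0 = 0) (hδ : δ 0 = 0) {i k : ℕ} (a : A) {b : B}
    (h : i < k ∨ b = 0) : act a (piFun σ δ i k b) = 0 := by
  obtain hk | rfl := h
  · rw [piFun_eq_zero_of_lt hk, act_zero]
  · rw [piFun_zero hσ hδ, act_zero]

end PiFun

section OreAct

open Finset.HasAntidiagonal (antidiagonal mem_antidiagonal)

variable {A B : Type*} [Zero A] [AddCommGroup B] {act : A → B → B} {σ δ : B → B}

theorem oreAct_single_apply (act_zero : ∀ a, act a 0 = 0) (zero_act : ∀ b, act 0 b = 0)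
    (hσ : σ 0 = 0) (hδ : δ 0 = 0) (i : ℕ) (a : A) (p : ℕ →₀ B) (n : ℕ) :
    oreAct act σ δ (Finsupp.single i a) p n =
      ∑ kj ∈ antidiagonal n, act a (piFun σ δ i kj.1 (p kj.2)) := by
  rw [oreAct, Finsupp.sum_single_index (by simp [zero_act])]
  simp only [Finsupp.sum, Finsupp.finsetSum_apply, Finsupp.single_apply]
  rw [Finset.sum_comm, ← Finset.sum_product', ← Finset.sum_filter]
  refine Finset.sum_subset (fun kj h => mem_antidiagonal.2 (Finset.mem_filter.1 h).2) ?_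
  rintro ⟨k, j⟩ hkj hnot
  rw [mem_antidiagonal] at hkj
  refine act_piFun_eq_zero act_zero hσ hδ a ?_
  by_contra! h
  exact hnot (by simpa [hkj, Nat.lt_succ_iff] using h)

theorem oreAct_single_apply_eq_zero_of_lt (act_zero : ∀ a, act a 0 = 0)
    (zero_act : ∀ b, act 0 b = 0) (hσ : σ 0 = 0) (hδ : δ 0 = 0) (i : ℕ) (a : A) {p : ℕ →₀ B} {n : ℕ}
    (hp : ∀ j, n < j → p j = 0) {l : ℕ} (hl : n + i < l) :
    oreAct act σ δ (Finsupp.single i a) p l = 0 := by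
  rw [oreAct_single_apply act_zero zero_act hσ hδ]
  refine Finset.sum_eq_zero fun ⟨k, j⟩ hkj => ?_
  rw [mem_antidiagonal] at hkj
  have : i < k ∨ n < j := by lia
  exact act_piFun_eq_zero act_zero hσ hδ a (this.imp_right (hp j))

theorem oreAct_single_apply_add (act_zero : ∀ a, act a 0 = 0) (zero_act : ∀ b, act 0 b = 0)
    (hσ : σ 0 = 0) (hδ : δ 0 = 0) (i : ℕ) (a : A) {p : ℕ →₀ B} {n : ℕ}
    (hp : ∀ j, n < j → p j = 0) :
    oreAct act σ δ (Finsupp.single i a) p (n + i) = act a (σ^[i] (p n)) := by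
  rw [oreAct_single_apply act_zero zero_act hσ hδ, Finset.sum_eq_single (i, n), piFun_self]
  · rintro ⟨k, j⟩ hkj hne
    rw [mem_antidiagonal] at hkj
    have : i < k ∨ n < j := by grind
    exact act_piFun_eq_zero act_zero hσ hδ a (this.imp_right (hp j))
  · exact fun h => absurd (mem_antidiagonal.2 (add_comm i n)) h

end OreAct

section LeadingCoeffs

variable {A B : Type*} [AddCommGroup B]

/-- The group of leading coefficients of a group `U` of polynomials in degree `n`: the coefficients
of `xⁿ` in the members of `U` of degree at most `n`, zero included. -/
def leadingCoeffs (U : AddSubgroup (ℕ →₀ B)) (n : ℕ) : AddSubgroup B where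
  carrier := {b | ∃ p ∈ U, (∀ j, n < j → p j = 0) ∧ p n = b}
  zero_mem' := ⟨0, U.zero_mem, fun _ _ => rfl, rfl⟩
  add_mem' := by
    rintro _ _ ⟨p, hp, hpn, rfl⟩ ⟨q, hq, hqn, rfl⟩
    exact ⟨p + q, U.add_mem hp hq, fun j hj => by simp [hpn j hj, hqn j hj], rfl⟩
  neg_mem' := by
    rintro _ ⟨p, hp, hpn, rfl⟩
    exact ⟨-p, U.neg_mem hp, fun j hj => by simp [hpn j hj], rfl⟩

theorem leadingCoeffs_mono {U V : AddSubgroup (ℕ →₀ B)} (h : U ≤ V) (n : ℕ) :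
    leadingCoeffs U n ≤ leadingCoeffs V n :=
  fun _ ⟨p, hp, hpn⟩ => ⟨p, h hp, hpn⟩

theorem le_of_leadingCoeffs_le {U V : AddSubgroup (ℕ →₀ B)} (hUV : U ≤ V)
    (h : ∀ n, leadingCoeffs V n ≤ leadingCoeffs U n) : V ≤ U := by
  have mem_of_degree_lt (n : ℕ) : ∀ p ∈ V, (∀ j, n ≤ j → p j = 0) → p ∈ U := by
    induction n with
    | zero =>
      intro p _ hp0
      obtain rfl : p = 0 := Finsupp.ext fun j => hp0 j j.zero_le
      exact U.zero_mem
    | succ n ih =>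
      intro p hp hpn
      obtain ⟨q, hq, hqn, hqp⟩ := h n ⟨p, hp, hpn, rfl⟩
      have sub_mem : p - q ∈ U := by
        refine ih _ (V.sub_mem hp (hUV hq)) fun j hj => ?_
        obtain rfl | hj := hj.eq_or_lt
        · simp [hqp]
        · simp [hqn j hj, hpn j hj]
      simpa using U.add_mem sub_mem hq
  intro p hp
  obtain ⟨n, hn⟩ := p.support.bddAbove
  refine mem_of_degree_lt (n + 1) p hp fun j hj => ?_
  by_contra hpj
  exact (Nat.lt_of_succ_le hj).not_ge (hn (Finsupp.mem_support_iff.2 hpj))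

/-- The preimage of the group of leading coefficients of `U` in degree `n` under `σⁿ`, taken as an
`n`-fold preimage under `σ`. In contrast to `leadingCoeffs U n`, it increases with `n` for the
submodules `U` of an Ore extension of an s-unital module. -/
def untwistedLeadingCoeffs (σ : B →+ B) (U : AddSubgroup (ℕ →₀ B)) (n : ℕ) : AddSubgroup B :=
  (AddSubgroup.comap σ)^[n] (leadingCoeffs U n)

theorem untwistedLeadingCoeffs_mono (σ : B →+ B) {U V : AddSubgroup (ℕ →₀ B)} (h : U ≤ V)
    (n : ℕ) : untwistedLeadingCoeffs σ U n ≤ untwistedLeadingCoeffs σ V n :=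
  (AddSubgroup.gc_map_comap σ).monotone_u.iterate n (leadingCoeffs_mono h n)

theorem eq_of_untwistedLeadingCoeffs_eq {σ : B →+ B} (hσ : Function.Surjective σ)
    {U V : AddSubgroup (ℕ →₀ B)} (hUV : U ≤ V)
    (h : ∀ n, untwistedLeadingCoeffs σ U n = untwistedLeadingCoeffs σ V n) : U = V :=
  hUV.antisymm <| le_of_leadingCoeffs_le hUV fun n =>
    ((AddSubgroup.comap_injective hσ).iterate n (h n)).ge

variable [Zero A] {act : A → B → B} {σ : B →+ B} {δ : B → B} {U : AddSubgroup (ℕ →₀ B)}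

theorem act_iterate_mem_leadingCoeffs (act_zero : ∀ a, act a 0 = 0) (zero_act : ∀ b, act 0 b = 0)
    (hδ : δ 0 = 0) (hU : IsStableAdd (oreAct act σ δ) U) (i : ℕ) (a : A) {n : ℕ} {b : B}
    (hb : b ∈ leadingCoeffs U n) : act a (σ^[i] b) ∈ leadingCoeffs U (n + i) := by
  obtain ⟨p, hp, hpn, rfl⟩ := hb
  exact ⟨_, hU (Finsupp.single i a) p hp,
    fun l hl => oreAct_single_apply_eq_zero_of_lt act_zero zero_act (map_zero σ) hδ i a hpn hl,
    oreAct_single_apply_add act_zero zero_act (map_zero σ) hδ i a hpn⟩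

theorem isStableAdd_leadingCoeffs (act_zero : ∀ a, act a 0 = 0) (zero_act : ∀ b, act 0 b = 0)
    (hδ : δ 0 = 0) (hU : IsStableAdd (oreAct act σ δ) U) (n : ℕ) :
    IsStableAdd act (leadingCoeffs U n) :=
  fun a _ hb => act_iterate_mem_leadingCoeffs act_zero zero_act hδ hU 0 a hb

theorem leadingCoeffs_le_comap_succ (act_zero : ∀ a, act a 0 = 0) (zero_act : ∀ b, act 0 b = 0)
    (hδ : δ 0 = 0) (hsu : ∀ b, ∃ a, act a b = b) (hU : IsStableAdd (oreAct act σ δ) U) (n : ℕ) :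
    leadingCoeffs U n ≤ (leadingCoeffs U (n + 1)).comap σ := by
  intro b hb
  obtain ⟨a, ha⟩ := hsu (σ b)
  have := act_iterate_mem_leadingCoeffs act_zero zero_act hδ hU 1 a hb
  rwa [Function.iterate_one, ha] at this

theorem isStableAdd_untwistedLeadingCoeffs (act_zero : ∀ a, act a 0 = 0)
    (zero_act : ∀ b, act 0 b = 0) (hδ : δ 0 = 0) (τ : A → A)
    (hσ : ∀ a b, σ (act a b) = act (τ a) (σ b)) (hU : IsStableAdd (oreAct act σ δ) U) (n : ℕ) :
    IsStableAdd act (untwistedLeadingCoeffs σ U n) :=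
  Function.Iterate.rec (IsStableAdd act) (isStableAdd_leadingCoeffs act_zero zero_act hδ hU n)
    (fun _ hC => hC.comap σ τ hσ) n

theorem monotone_untwistedLeadingCoeffs (act_zero : ∀ a, act a 0 = 0)
    (zero_act : ∀ b, act 0 b = 0) (hδ : δ 0 = 0) (hsu : ∀ b, ∃ a, act a b = b)
    (hU : IsStableAdd (oreAct act σ δ) U) : Monotone (untwistedLeadingCoeffs σ U) :=
  monotone_nat_of_le_succ fun n => (AddSubgroup.gc_map_comap σ).monotone_u.iterate n <|
    leadingCoeffs_le_comap_succ act_zero zero_act hδ hsu hU n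

end LeadingCoeffs

theorem stmt17_general {A B : Type*} [Zero A] [AddCommGroup B] (act : A → B → B)
    (act_zero : ∀ a, act a 0 = 0) (zero_act : ∀ b, act 0 b = 0) (hsu : ∀ b, ∃ a, act a b = b)
    (hNoeth : StablyNoetherianAdd act) {σ : B →+ B} (hsurj : Function.Surjective σ) (τ : A → A)
    (htw : ∀ a b, σ (act a b) = act (τ a) (σ b)) {δ : B → B} (hδ : δ 0 = 0) :
    StablyNoetherianAdd (oreAct act σ δ) := by
  rw [stablyNoetherianAdd_iff_wellFoundedGT] at hNoeth ⊢
  let coeffs (U : {U // IsStableAdd (oreAct act σ δ) U}) : ℕ →o {C // IsStableAdd act C} :=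
    { toFun n := ⟨untwistedLeadingCoeffs σ U n,
        isStableAdd_untwistedLeadingCoeffs act_zero zero_act hδ τ htw U.2 n⟩
      monotone' := monotone_untwistedLeadingCoeffs act_zero zero_act hδ hsu U.2 }
  have coeffs_strictMono : StrictMono coeffs := fun U V hUV =>
    lt_of_le_of_ne (fun n => untwistedLeadingCoeffs_mono σ hUV.le n) fun h =>
      hUV.ne <| Subtype.ext <| eq_of_untwistedLeadingCoeffs_eq hsurj hUV.le fun n =>
        congrArg Subtype.val (DFunLike.congr_fun h n)
  have := wellFoundedGT_orderHom (ι := ℕ) (α := {C // IsStableAdd act C})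
  exact coeffs_strictMono.wellFoundedGT

/-- Let `R` be a left distributive ring (with `0r = 0`), let
`σR δR : R → R` be maps, and let `M` be a left distributive, s-unital and
Noetherian left `R`-module (with `0m = 0`).  If `σM` is a `σR`-twisted
surjective additive endomorphism of `M` (and `δM` is any additive endomorphism
of `M`), then the Ore module extension `M[x;σM,δM]` is Noetherian as a left
`R[x;σR,δR]`-module: every ascending chain of `R[x]`-submodules of `M[x]`
(additive subgroups closed under the Ore action) stabilizes.
Noetherianity of `M` and of `M[x]` is expressed via `StablyNoetherianAdd`,
whose stable subgroups are exactly the submodules. -/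
theorem stmt17 {R M : Type*} [AddCommGroup R] [AddCommGroup M]
    (mul : R → R → R) (smul : R → M → M)
    (hmul_ld : ∀ r s t : R, mul r (s + t) = mul r s + mul r t)
    (h0r : ∀ r : R, mul 0 r = 0)
    (hsmul_ld : ∀ (r : R) (m n : M), smul r (m + n) = smul r m + smul r n)
    (h0m : ∀ m : M, smul 0 m = 0)
    (σR δR : R → R) (σM δM : M →+ M)
    (hsu : ∀ m : M, ∃ r : R, smul r m = m)
    (hNoeth : StablyNoetherianAdd smul)
    (hsurj : Function.Surjective ⇑σM)
    (htw : ∀ (r : R) (m : M), σM (smul r m) = smul (σR r) (σM m)) :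
    StablyNoetherianAdd (fun (α : ℕ →₀ R) (μ : ℕ →₀ M) => oreAct smul ⇑σM ⇑δM α μ) :=
  stmt17_general smul (fun r => by simpa using hsmul_ld r 0 0) h0m hsu hNoeth hsurj σR htw
    (map_zero δM)
end

section
/- Let R be a left distributive ring with 0r = 0 for all r ∈ R, and consider R[x] as a left module over itself via (∑_i r_i x^i)(∑_j s_j x^j) := ∑_{i,j} (r_i s_j) x^{i+j}. Then R[x] is left Noetherian if and only if R is left Noetherian and weakly left s-unital. In particular, if R is unital (there exists e ∈ R with er = r for all r ∈ R), then R[x] is left Noetherian if and only if R is left Noetherian. -/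
/-!
For a left ideal `I` of `R[x]`, let `L d` be the group of degree-`d` leading coefficients of `I`.
Multiplying by `a xᵐ` shows `a L d ⊆ L (m + d)`. A unit is usually what makes `L` increasing (via
`x I ⊆ I`), but weak s-unitality is enough: if `b ∈ L d`, then `L d` contains all products
`a₂ (⋯ (aₙ b))`, so `L (m + d)` contains all products `a₁ (a₂ (⋯ (aₙ b)))`, and hence `b`, which is
a signed sum of these. From here Hilbert's argument applies unchanged.

Conversely, let `D` be a left ideal of `R` with `R c ⊆ D`. The polynomials whose coefficients `s`
all satisfy `R s ⊆ D`, and lie in `D` from degree `n` on, form a left ideal `I n`; the chain `I n`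
is strictly ascending unless `c ∈ D`. Weak s-unitality is the case `D = [r]`, `c = r`.

The same argument works for any set `A ∋ 0` of additive operators on an abelian group `B`, with
`A[x]` acting on `B[x]`; the theorem is the case `A = B = R`.
-/

section Operators

variable {A B : Type*} [AddGroup B] {act : A → B → B}

theorem bracketAdd_le {S : Set B} {C D : AddSubgroup B} (hC : IsStableAdd act C)
    (hS : S ⊆ C) (hCD : ∀ a, ∀ b ∈ C, act a b ∈ D) : bracketAdd act S ≤ D := by
  have opSet_subset (n : ℕ) : opSet act S n ⊆ C := by
    induction n with
    | zero => exact hS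
    | succ n ih =>
      rintro _ ⟨a, s, hs, rfl⟩
      exact hC a s (ih hs)
  refine (AddSubgroup.closure_le D).2 (Set.iUnion_subset fun n ↦ ?_)
  rintro _ ⟨a, s, hs, rfl⟩
  exact hCD a s (opSet_subset n hs)

theorem act_mem_bracketAdd {S : Set B} {n : ℕ} {s : B} (hs : s ∈ opSet act S n) (a : A) :
    act a s ∈ bracketAdd act S :=
  AddSubgroup.subset_closure (Set.mem_iUnion.2 ⟨n, a, s, hs, rfl⟩)

/-- The colon subgroup `(D : A)` of the elements that every operator sends into `D`. -/
def colonAdd (act : A → B → B) (hadd : ∀ a b c, act a (b + c) = act a b + act a c)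
    (D : AddSubgroup B) : AddSubgroup B :=
  ⨅ a, D.comap (AddMonoidHom.mk' (act a) (hadd a))

theorem mem_colonAdd {hadd : ∀ a b c, act a (b + c) = act a b + act a c} {D : AddSubgroup B}
    {b : B} : b ∈ colonAdd act hadd D ↔ ∀ a, act a b ∈ D := by
  simp [colonAdd, AddSubgroup.mem_iInf]

theorem isStableAdd_bracketAdd (hadd : ∀ a b c, act a (b + c) = act a b + act a c) (S : Set B) :
    IsStableAdd act (bracketAdd act S) := by
  have le_colon : bracketAdd act S ≤ colonAdd act hadd (bracketAdd act S) :=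
    (AddSubgroup.closure_le _).2 <| Set.iUnion_subset fun _ _ hs ↦
      mem_colonAdd.2 (act_mem_bracketAdd hs)
  exact fun a b hb ↦ mem_colonAdd.1 (le_colon hb) a

theorem StablyNoetherianAdd.exists_forall_eq_of_monotone_prod (h : StablyNoetherianAdd act)
    {F : ℕ × ℕ → AddSubgroup B} (hF : ∀ x, IsStableAdd act (F x)) (hmono : Monotone F) :
    ∃ N, ∀ n, N ≤ n → ∀ d, F (n, d) = F (N, d) := by
  obtain ⟨K, hK⟩ := h (fun k ↦ F (k, k)) (fun _ ↦ hF _) fun _ _ hkl ↦ hmono ⟨hkl, hkl⟩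
  choose g hg using fun d ↦ h (fun n ↦ F (n, d)) (fun _ ↦ hF _) fun _ _ hmn ↦ hmono ⟨hmn, le_rfl⟩
  have eq_diagonal {n d : ℕ} (hn : K ≤ n) (hd : K ≤ d) : F (n, d) = F (K, K) :=
    le_antisymm
      ((hmono ⟨le_max_left n d, le_max_right n d⟩).trans_eq (hK _ (hn.trans (le_max_left n d))))
      (hmono ⟨hn, hd⟩)
  refine ⟨max K ((Finset.range K).sup g), fun n hn d ↦ ?_⟩
  obtain hd | hd := lt_or_ge d K
  · have hgN : g d ≤ max K ((Finset.range K).sup g) :=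
      (Finset.le_sup (f := g) (Finset.mem_range.2 hd)).trans (le_max_right _ _)
    exact (hg d n (hgN.trans hn)).trans (hg d _ hgN).symm
  · exact (eq_diagonal ((le_max_left _ _).trans hn) hd).trans
      (eq_diagonal (le_max_left _ _) hd).symm

end Operators

section Coefficients

variable {B : Type*} [AddCommGroup B]

/-- The polynomials whose `j`-th coefficient lies in `C j` for every `j`. -/
noncomputable def coeffSubgroup (C : ℕ → AddSubgroup B) : AddSubgroup (ℕ →₀ B) :=
  (AddSubgroup.pi Set.univ C).comap Finsupp.coeFnAddHom

theorem mem_coeffSubgroup {C : ℕ → AddSubgroup B} {p : ℕ →₀ B} :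
    p ∈ coeffSubgroup C ↔ ∀ j, p j ∈ C j := by
  simp [coeffSubgroup, AddSubgroup.mem_pi]

theorem single_mem_coeffSubgroup {C : ℕ → AddSubgroup B} {k : ℕ} {b : B} :
    Finsupp.single k b ∈ coeffSubgroup C ↔ b ∈ C k := by
  refine mem_coeffSubgroup.trans ⟨fun h ↦ by simpa using h k, fun hb j ↦ ?_⟩
  obtain rfl | hjk := eq_or_ne j k
  · simpa using hb
  · simp [Finsupp.single_eq_of_ne hjk]

theorem coeffSubgroup_mono : Monotone (coeffSubgroup (B := B)) :=
  fun _ _ hCD _ hp ↦ mem_coeffSubgroup.2 fun j ↦ hCD j (mem_coeffSubgroup.1 hp j)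

/-- The group of `d`-th coefficients of the polynomials of degree at most `d` in `I`, that is,
zero together with the leading coefficients in degree `d`. -/
noncomputable def leadingCoeffSubgroup (I : AddSubgroup (ℕ →₀ B)) (d : ℕ) : AddSubgroup B :=
  (I ⊓ (Finsupp.supported B ℤ (Set.Iic d)).toAddSubgroup).map (Finsupp.applyAddHom d)

theorem mem_leadingCoeffSubgroup {I : AddSubgroup (ℕ →₀ B)} {d : ℕ} {b : B} :
    b ∈ leadingCoeffSubgroup I d ↔ ∃ p ∈ I, (∀ j, d < j → p j = 0) ∧ p d = b := by
  simp [leadingCoeffSubgroup, Finsupp.mem_supported', and_assoc]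

theorem leadingCoeffSubgroup_mono_left {I J : AddSubgroup (ℕ →₀ B)} (hIJ : I ≤ J) (d : ℕ) :
    leadingCoeffSubgroup I d ≤ leadingCoeffSubgroup J d :=
  AddSubgroup.map_mono (inf_le_inf_right _ hIJ)

theorem eq_of_le_of_leadingCoeffSubgroup_le {I J : AddSubgroup (ℕ →₀ B)} (hIJ : I ≤ J)
    (h : ∀ d, leadingCoeffSubgroup J d ≤ leadingCoeffSubgroup I d) : I = J := by
  have mem_of_degree_lt (d : ℕ) : ∀ p ∈ J, (∀ j, d ≤ j → p j = 0) → p ∈ I := by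
    induction d with
    | zero =>
      intro p _ hp
      obtain rfl : p = 0 := Finsupp.ext fun j ↦ hp j j.zero_le
      exact zero_mem I
    | succ d ih =>
      intro p hpJ hp
      obtain ⟨q, hqI, hq, hqd⟩ :=
        mem_leadingCoeffSubgroup.1 (h d (mem_leadingCoeffSubgroup.2 ⟨p, hpJ, hp, rfl⟩))
      have hpq : p - q ∈ I := ih _ (sub_mem hpJ (hIJ hqI)) fun j hj ↦ by
        obtain rfl | hj := hj.eq_or_lt
        · simp [hqd]
        · simp [hp j hj, hq j hj]
      exact sub_add_cancel p q ▸ add_mem hpq hqI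
  refine hIJ.antisymm fun p hp ↦ ?_
  obtain ⟨d, hd⟩ := p.support.exists_nat_subset_range
  exact mem_of_degree_lt d p hp fun j hj ↦
    Finsupp.notMem_support_iff.1 fun hjp ↦ (Finset.mem_range.1 (hd hjp)).not_ge hj

end Coefficients

section Polynomials

variable {A B : Type*} [Zero A] [AddCommGroup B] {act : A → B → B}

/-- The action of `A[x]` on `B[x]` given by `(∑ aᵢ xⁱ)(∑ bⱼ xʲ) = ∑ (aᵢ bⱼ) x^{i+j}`. -/
noncomputable def polyAct (act : A → B → B) (α : ℕ →₀ A) (β : ℕ →₀ B) : ℕ →₀ B :=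
  α.sum fun i a ↦ β.sum fun j b ↦ Finsupp.single (i + j) (act a b)

theorem polyAct_single_apply_add (hzero : ∀ b, act 0 b = 0) (hact : ∀ a, act a 0 = 0)
    (m : ℕ) (a : A) (p : ℕ →₀ B) (j : ℕ) :
    polyAct act (Finsupp.single m a) p (m + j) = act a (p j) := by
  rw [polyAct, Finsupp.sum_single_index (by simp [hzero])]
  simp +contextual [Finsupp.sum_apply, Finsupp.single_apply, Finsupp.sum_ite_eq', hact]

theorem isStableAdd_coeffSubgroup {C : ℕ → AddSubgroup B}
    (hC : ∀ a i j, ∀ b ∈ C j, act a b ∈ C (i + j)) :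
    IsStableAdd (polyAct act) (coeffSubgroup C) := fun _ _ hβ ↦
  sum_mem fun i _ ↦ sum_mem fun j _ ↦
    single_mem_coeffSubgroup.2 (hC _ i j _ (mem_coeffSubgroup.1 hβ j))

theorem StablyNoetherianAdd.of_polyAct (h : StablyNoetherianAdd (polyAct act)) :
    StablyNoetherianAdd act := by
  intro f hf hmono
  obtain ⟨N, hN⟩ := h (fun n ↦ coeffSubgroup fun _ ↦ f n)
    (fun n ↦ isStableAdd_coeffSubgroup fun a _ _ ↦ hf n a)
    fun _ _ hmn ↦ coeffSubgroup_mono fun _ ↦ hmono hmn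
  refine ⟨N, fun n hn ↦ AddSubgroup.ext fun b ↦ ?_⟩
  rw [← single_mem_coeffSubgroup (C := fun _ ↦ f n) (k := 0), hN n hn, single_mem_coeffSubgroup]

theorem StablyNoetherianAdd.colonAdd_le (h : StablyNoetherianAdd (polyAct act))
    (hadd : ∀ a b c, act a (b + c) = act a b + act a c) {D : AddSubgroup B}
    (hD : IsStableAdd act D) : colonAdd act hadd D ≤ D := by
  let C (n j : ℕ) : AddSubgroup B := if j < n then colonAdd act hadd D else D
  have D_le_colon : D ≤ colonAdd act hadd D := fun b hb ↦ mem_colonAdd.2 fun a ↦ hD a b hb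
  have D_le_C (n j : ℕ) : D ≤ C n j := by
    dsimp only [C]
    split_ifs
    exacts [D_le_colon, le_rfl]
  have C_le_colon (n j : ℕ) : C n j ≤ colonAdd act hadd D := by
    dsimp only [C]
    split_ifs
    exacts [le_rfl, D_le_colon]
  have C_mono : Monotone C := fun m n hmn j ↦ by
    by_cases hj : j < m
    · exact (C_le_colon m j).trans_eq (if_pos (hj.trans_le hmn)).symm
    · exact (if_neg hj).trans_le (D_le_C n j)
  obtain ⟨N, hN⟩ := h (fun n ↦ coeffSubgroup (C n))
    (fun n ↦ isStableAdd_coeffSubgroup fun a i j b hb ↦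
      D_le_C n (i + j) (mem_colonAdd.1 (C_le_colon n j hb) a))
    (coeffSubgroup_mono.comp C_mono)
  intro c hc
  have hcN : Finsupp.single N c ∈ coeffSubgroup (C (N + 1)) :=
    single_mem_coeffSubgroup.2 (by simpa [C] using hc)
  rw [hN (N + 1) N.le_succ, single_mem_coeffSubgroup] at hcN
  simpa [C] using hcN

theorem StablyNoetherianAdd.mem_bracketAdd_singleton (h : StablyNoetherianAdd (polyAct act))
    (hadd : ∀ a b c, act a (b + c) = act a b + act a c) (b : B) : b ∈ bracketAdd act {b} :=
  h.colonAdd_le hadd (isStableAdd_bracketAdd hadd {b}) <|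
    mem_colonAdd.2 (act_mem_bracketAdd (n := 0) rfl)

theorem act_mem_leadingCoeffSubgroup (hzero : ∀ b, act 0 b = 0) (hact : ∀ a, act a 0 = 0)
    {I : AddSubgroup (ℕ →₀ B)} (hI : IsStableAdd (polyAct act) I) (m : ℕ) {d : ℕ} (a : A)
    {b : B} (hb : b ∈ leadingCoeffSubgroup I d) : act a b ∈ leadingCoeffSubgroup I (m + d) := by
  obtain ⟨p, hpI, hp, rfl⟩ := mem_leadingCoeffSubgroup.1 hb
  refine mem_leadingCoeffSubgroup.2 ⟨polyAct act (Finsupp.single m a) p, hI _ p hpI,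
    fun j hj ↦ ?_, polyAct_single_apply_add hzero hact m a p d⟩
  obtain ⟨k, rfl⟩ := Nat.exists_eq_add_of_le (show m ≤ j by lia)
  rw [polyAct_single_apply_add hzero hact, hp k (by lia), hact]

theorem isStableAdd_leadingCoeffSubgroup (hzero : ∀ b, act 0 b = 0) (hact : ∀ a, act a 0 = 0)
    {I : AddSubgroup (ℕ →₀ B)} (hI : IsStableAdd (polyAct act) I) (d : ℕ) :
    IsStableAdd act (leadingCoeffSubgroup I d) := fun a _ hb ↦ by
  simpa using act_mem_leadingCoeffSubgroup hzero hact hI 0 a hb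

theorem leadingCoeffSubgroup_mono (hzero : ∀ b, act 0 b = 0) (hact : ∀ a, act a 0 = 0)
    (hunital : ∀ b, b ∈ bracketAdd act {b})
    {I : AddSubgroup (ℕ →₀ B)} (hI : IsStableAdd (polyAct act) I) :
    Monotone (leadingCoeffSubgroup I) := by
  intro d e hde b hb
  obtain ⟨m, rfl⟩ := Nat.exists_eq_add_of_le' hde
  exact bracketAdd_le (isStableAdd_leadingCoeffSubgroup hzero hact hI d)
    (Set.singleton_subset_iff.2 hb)
    (fun a _ ↦ act_mem_leadingCoeffSubgroup hzero hact hI m a) (hunital b)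

theorem StablyNoetherianAdd.to_polyAct (h : StablyNoetherianAdd act) (hzero : ∀ b, act 0 b = 0)
    (hact : ∀ a, act a 0 = 0) (hunital : ∀ b, b ∈ bracketAdd act {b}) :
    StablyNoetherianAdd (polyAct act) := by
  intro f hf hmono
  have lead_mono : Monotone fun x : ℕ × ℕ ↦ leadingCoeffSubgroup (f x.1) x.2 := fun x y hxy ↦
    (leadingCoeffSubgroup_mono_left (hmono hxy.1) x.2).trans
      (leadingCoeffSubgroup_mono hzero hact hunital (hf y.1) hxy.2)
  obtain ⟨N, hN⟩ := h.exists_forall_eq_of_monotone_prod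
    (fun x ↦ isStableAdd_leadingCoeffSubgroup hzero hact (hf x.1) x.2) lead_mono
  exact ⟨N, fun n hn ↦ (eq_of_le_of_leadingCoeffSubgroup_le (hmono hn) fun d ↦ (hN n hn d).le).symm⟩

theorem stablyNoetherianAdd_polyAct_iff (hadd : ∀ a b c, act a (b + c) = act a b + act a c)
    (hzero : ∀ b, act 0 b = 0) :
    StablyNoetherianAdd (polyAct act) ↔
      StablyNoetherianAdd act ∧ ∀ b, b ∈ bracketAdd act {b} :=
  ⟨fun h ↦ ⟨h.of_polyAct, h.mem_bracketAdd_singleton hadd⟩, fun ⟨h, hunital⟩ ↦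
    h.to_polyAct hzero (fun a ↦ map_zero (AddMonoidHom.mk' (act a) (hadd a))) hunital⟩

end Polynomials

theorem stmt19_general {A B : Type*} [Zero A] [AddCommGroup B] (act : A → B → B)
    (hadd : ∀ a b c, act a (b + c) = act a b + act a c) (hzero : ∀ b, act 0 b = 0) :
    (StablyNoetherianAdd (polyAct act) ↔
      StablyNoetherianAdd act ∧ ∀ b, b ∈ bracketAdd act {b}) ∧
    ((∃ e, ∀ b, act e b = b) →
      (StablyNoetherianAdd (polyAct act) ↔ StablyNoetherianAdd act)) := by
  have noetherian_iff := stablyNoetherianAdd_polyAct_iff hadd hzero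
  refine ⟨noetherian_iff, fun ⟨e, he⟩ ↦ noetherian_iff.trans (and_iff_left fun b ↦ ?_)⟩
  simpa only [he] using act_mem_bracketAdd (act := act) (S := {b}) (n := 0) rfl e

/-- Let `R` be a left distributive ring (with `0r = 0`), and
consider `R[x]` as a left module over itself via
`(∑ rᵢ xⁱ)(∑ sⱼ xʲ) = ∑ (rᵢ sⱼ) x^{i+j}`.  Then `R[x]` is left Noetherian if
and only if `R` is left Noetherian and weakly left s-unital.  In particular, if
`R` is unital, then `R[x]` is left Noetherian if and only if `R` is left
Noetherian.
Left Noetherianity (the ascending chain condition on left ideals, i.e. additive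
subgroups closed under left multiplication) is expressed via
`StablyNoetherianAdd`, and weak left s-unitality via `bracketAdd`. -/
theorem stmt19 {R : Type*} [AddCommGroup R] (mul : R → R → R)
    (hld : ∀ r s t : R, mul r (s + t) = mul r s + mul r t)
    (h0r : ∀ r : R, mul 0 r = 0) :
    (StablyNoetherianAdd (fun (α β : ℕ →₀ R) =>
        α.sum fun i r => β.sum fun j s => Finsupp.single (i + j) (mul r s)) ↔
      (StablyNoetherianAdd mul ∧ ∀ r : R, r ∈ bracketAdd mul {r})) ∧
    ((∃ e : R, ∀ r : R, mul e r = r) →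
      (StablyNoetherianAdd (fun (α β : ℕ →₀ R) =>
          α.sum fun i r => β.sum fun j s => Finsupp.single (i + j) (mul r s)) ↔
        StablyNoetherianAdd mul)) :=
  stmt19_general mul hld h0r
end
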